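/- (Poltoratski's theorem on nontangential boundary values.) Let σ be a nonzero finite positive Borel measure on 𝕋 and let f ∈ L¹(σ). Then for σ_s-almost every z ∈ 𝕋, the radial limit lim_{r→1⁻} 𝒦_{fσ}(rz)/𝒦_σ(rz) exists and equals f(z), where σ_s denotes the singular part of σ with respect to normalized Lebesgue measure m on 𝕋. -/

import Mathlib

/-!
Write `P_σ` for the Poisson integral of `σ`, `K_g` for the Cauchy transform of `g σ`, and
`φ_g = K_g / K_1`. At `σ_s`-almost every point `z` of the circle `P_σ (r z) → ∞`, hence
`K_1 (r z) → ∞`. If `g` is Lipschitz, `K_g - g(z) K_1` stays bounded along the radius, so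
`φ_g (r z) → g(z)`. For real `g ∈ L²(σ)` the function `Re (2 K_{g²} - K_g² / K_1)` is harmonic,
nonnegative and at least `|φ_g|² Re K_1 / 2`: this is the nonnegativity of the quadratic polynomial
`t ↦ Re ∫ (g - t)² (1 - ξ̄ w)⁻¹ dσ(ξ)` at `t = Re φ_g / 2`. By Herglotz' theorem it is the Poisson
integral of a measure `τ` with `τ(𝕋) ≤ 2 ∫ g² dσ`, so that `|φ_g|²` is bounded by a multiple of
`P_τ / P_σ`, whose radial upper limit is at most `dτ/dσ` by Besicovitch differentiation. This takes
the place of a maximal inequality when `f ∈ L²(σ)` is approximated by Lipschitz functions. For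
`f ∈ L¹(σ)` one passes to the measure `(1 + |f|) σ`, with respect to which `φ_f` is a quotient of
two such transforms of bounded functions.
-/

open MeasureTheory Complex Set Filter

/-- Normalized Lebesgue (Haar) measure on the unit circle `𝕋 ⊆ ℂ`. -/
noncomputable def circleHaar : Measure ℂ :=
  (ENNReal.ofReal (2 * Real.pi)⁻¹) •
    (volume.restrict (Set.Ioc 0 (2 * Real.pi))).map (circleMap 0 1)

namespace Poltoratski

open Metric Topology InnerProductSpace
open scoped ENNReal NNReal ComplexConjugate

section GeneralMeasure

variable {α : Type*} [MeasurableSpace α] {μ ν : Measure α}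

lemma lintegral_ofReal_le_mul_of_meas_lt_le {f : α → ℝ} (hf : Measurable f) {C : ℝ≥0∞}
    (h : ∀ s, 0 < s → ν {a | s < f a} ≤ C * μ {a | s < f a}) :
    ∫⁻ a, ENNReal.ofReal (f a) ∂ν ≤ C * ∫⁻ a, ENNReal.ofReal (f a) ∂μ := by
  have layer_cake (ρ : Measure α) :
      ∫⁻ a, ENNReal.ofReal (f a) ∂ρ = ∫⁻ s in Ioi (0 : ℝ), ρ {a | s < f a} := by
    calc ∫⁻ a, ENNReal.ofReal (f a) ∂ρ
        = ∫⁻ a, ENNReal.ofReal (max (f a) 0) ∂ρ := by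
          simp only [ENNReal.ofReal_max, ENNReal.ofReal_zero, zero_le, sup_of_le_left]
      _ = ∫⁻ s in Ioi (0 : ℝ), ρ {a | s < max (f a) 0} :=
          lintegral_eq_lintegral_meas_lt ρ (.of_forall fun _ ↦ le_max_right _ _)
            (hf.max measurable_const).aemeasurable
      _ = ∫⁻ s in Ioi (0 : ℝ), ρ {a | s < f a} :=
          setLIntegral_congr_fun measurableSet_Ioi fun s (hs : 0 < s) ↦ by
            simp only [lt_sup_iff, hs.not_gt, or_false]
  have distribution_antitone : Antitone fun s ↦ μ {a | s < f a} :=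
    fun _ _ hst ↦ measure_mono fun _ ha ↦ hst.trans_lt ha
  rw [layer_cake, layer_cake, ← lintegral_const_mul _ distribution_antitone.measurable]
  exact setLIntegral_mono (distribution_antitone.measurable.const_mul _) h

lemma ae_iInf_eq_zero_of_iInf_lintegral_eq_zero {ι : Type*} [Countable ι] {h : ι → α → ℝ≥0∞}
    (hm : ∀ i, AEMeasurable (h i) μ) (h0 : ⨅ i, ∫⁻ a, h i a ∂μ = 0) :
    ∀ᵐ a ∂μ, ⨅ i, h i a = 0 :=
  (lintegral_eq_zero_iff' (AEMeasurable.iInf hm)).1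
    (le_antisymm ((le_iInf_lintegral h).trans h0.le) zero_le)

end GeneralMeasure

lemma measure_ball_le_mul_of_closedBall {α : Type*} [PseudoMetricSpace α] [MeasurableSpace α]
    {μ ν : Measure α} {x : α} {C : ℝ≥0∞} {δ : ℝ}
    (h : ∀ t ∈ Ioo 0 δ, ν (closedBall x t) ≤ C * μ (closedBall x t)) {t : ℝ} (ht : t ≤ δ) :
    ν (ball x t) ≤ C * μ (ball x t) := by
  rcases le_or_gt t 0 with ht0 | ht0
  · simp only [ball_eq_empty.2 ht0, measure_empty, zero_le]
  obtain ⟨u, hu_mono, hu_mem, hu_lim⟩ := exists_seq_strictMono_tendsto' ht0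
  have ball_eq : ball x t = ⋃ n, closedBall x (u n) := by
    refine subset_antisymm (fun y hy ↦ ?_) (iUnion_subset fun n ↦
      closedBall_subset_ball (hu_mem n).2)
    obtain ⟨n, hn⟩ := (hu_lim.eventually (lt_mem_nhds hy)).exists
    exact mem_iUnion_of_mem n hn.le
  have closedBall_mono : Monotone fun n ↦ closedBall x (u n) :=
    fun m n hmn ↦ closedBall_subset_closedBall (hu_mono.monotone hmn)
  nth_rw 1 [ball_eq]
  rw [closedBall_mono.measure_iUnion]
  refine iSup_le fun n ↦ (h _ ⟨(hu_mem n).1, (hu_mem n).2.trans_le ht⟩).trans ?_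
  gcongr
  exact closedBall_subset_ball (hu_mem n).2

lemma ae_forall_rnDeriv_lt_exists_closedBall_le {α : Type*} [MetricSpace α] [MeasurableSpace α]
    [BorelSpace α] [SecondCountableTopology α] [HasBesicovitchCovering α] (ν μ : Measure α)
    [IsLocallyFiniteMeasure ν] [IsLocallyFiniteMeasure μ] :
    ∀ᵐ x ∂μ, ∀ C : ℝ≥0, ν.rnDeriv μ x < C →
      ∃ δ > 0, ∀ t ∈ Ioo 0 δ, ν (closedBall x t) ≤ C * μ (closedBall x t) := by
  filter_upwards [Besicovitch.ae_tendsto_rnDeriv ν μ] with x hx C hC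
  obtain ⟨δ, hδ, hδ_sub⟩ := mem_nhdsGT_iff_exists_Ioo_subset.1 (hx.eventually (gt_mem_nhds hC))
  refine ⟨δ, hδ, fun t ht ↦ ?_⟩
  have hlt : ν (closedBall x t) / μ (closedBall x t) < C := hδ_sub ht
  exact (ENNReal.div_le_iff_le_mul (.inr ENNReal.coe_ne_top)
    (.inr (pos_of_gt hC).ne')).1 hlt.le

lemma tendsto_of_forall_exists_eventually_edist_le {ι α : Type*} [PseudoEMetricSpace α]
    {l : Filter ι} {v : ι → α} {b : α}
    (h : ∀ ε : ℝ≥0∞, ε ≠ 0 → ∃ u a, Tendsto u l (𝓝 a) ∧ edist a b ≤ ε ∧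
      ∀ᶠ i in l, edist (v i) (u i) ≤ ε) :
    Tendsto v l (𝓝 b) := by
  refine nhds_basis_closedEBall.tendsto_right_iff.2 fun ε hε ↦ ?_
  have hε3 : ε / 3 ≠ 0 := ENNReal.div_ne_zero.2 ⟨hε.ne', ENNReal.ofNat_ne_top⟩
  obtain ⟨u, a, hu, hab, hvu⟩ := h (ε / 3) hε3
  filter_upwards [EMetric.tendsto_nhds.1 hu (ε / 3) hε3.bot_lt, hvu] with i hua hvu
  calc edist (v i) b ≤ edist (v i) (u i) + edist (u i) a + edist a b := edist_triangle4 _ _ _ _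
    _ ≤ ε / 3 + ε / 3 + ε / 3 := by gcongr
    _ = ε := ENNReal.add_thirds ε

lemma exists_lipschitzWith_lintegral_enorm_sub_sq_le {E F : Type*} [NormedAddCommGroup E]
    [NormedSpace ℝ E] [FiniteDimensional ℝ E] [MeasurableSpace E] [BorelSpace E]
    [NormedAddCommGroup F] [NormedSpace ℝ F] {μ : Measure E} [IsFiniteMeasureOnCompacts μ]
    {f : E → F} (hf : MemLp f 2 μ) {ε : ℝ≥0∞} (hε : ε ≠ 0) :
    ∃ g : E → F, (∃ L, LipschitzWith L g) ∧ MemLp g 2 μ ∧ ∫⁻ x, ‖f x - g x‖ₑ ^ 2 ∂μ ≤ ε := by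
  obtain ⟨δ, hδε, hδ⟩ : ∃ δ : ℝ, ENNReal.ofReal δ ^ 2 ≤ ε ∧ 0 < δ := by
    have hlim : Tendsto (fun δ : ℝ ↦ ENNReal.ofReal δ ^ 2) (𝓝[>] 0) (𝓝 0) :=
      (((ENNReal.continuous_pow 2).comp ENNReal.continuous_ofReal).tendsto' 0 0
        (by simp)).mono_left nhdsWithin_le_nhds
    exact ((hlim.eventually_le_const hε.bot_lt).and self_mem_nhdsWithin).exists
  obtain ⟨g, hg_supp, hg_smooth, hfg⟩ := hf.exist_eLpNorm_sub_le (by simp) one_le_two hδ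
  refine ⟨g, ⟨_, (hg_smooth.lipschitzWith_of_hasCompactSupport hg_supp (by simp)).choose_spec⟩,
    hg_smooth.continuous.memLp_of_hasCompactSupport hg_supp, ?_⟩
  calc ∫⁻ x, ‖f x - g x‖ₑ ^ 2 ∂μ = eLpNorm (f - g) 2 μ ^ 2 := by
        have := eLpNorm_nnreal_pow_eq_lintegral (f := f - g) (μ := μ) (p := 2) two_ne_zero
        simpa using this.symm
    _ ≤ ENNReal.ofReal δ ^ 2 := by gcongr
    _ ≤ ε := hδε

section WeakCompactness

variable {E : Type*} [TopologicalSpace E]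

lemma exists_boundedContinuousFunction_eqOn [NormalSpace E] [T2Space E] {K : Set E}
    (hK : IsCompact K) {g : E → ℝ} (hg : ContinuousOn g K) :
    ∃ G : BoundedContinuousFunction E ℝ, EqOn G g K := by
  have : CompactSpace K := isCompact_iff_compactSpace.1 hK
  obtain ⟨G, -, hG⟩ := BoundedContinuousFunction.exists_norm_eq_domRestrict_eq_of_closed
    (.mkOfCompact ⟨K.domRestrict g, hg.domRestrict⟩) hK.isClosed
  exact ⟨G, fun ξ hξ ↦ congr($hG ⟨ξ, hξ⟩)⟩

lemma exists_ultrafilter_tendsto_integral [NormalSpace E] [T2Space E] [MeasurableSpace E]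
    [BorelSpace E] {K : Set E} (hK : IsCompact K) {M : ℝ≥0} {ι : Type*} (l : Filter ι) [l.NeBot]
    {ν : ι → FiniteMeasure E} (hν_mass : ∀ i, (ν i).mass ≤ M) (hν_supp : ∀ i, ν i Kᶜ = 0) :
    ∃ τ : FiniteMeasure E, τ Kᶜ = 0 ∧ ∃ u : Ultrafilter ι, ↑u ≤ l ∧
      ∀ g : E → ℝ, ContinuousOn g K →
        Tendsto (fun i ↦ ∫ ξ, g ξ ∂(ν i : Measure E)) u (𝓝 (∫ ξ, g ξ ∂(τ : Measure E))) := by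
  obtain ⟨τ, ⟨-, hτ⟩, hlim⟩ :=
    (isCompact_setOfPred_finiteMeasure_le_of_isCompact M hK).ultrafilter_le_nhds'
      ((Ultrafilter.of l).map ν)
      (Ultrafilter.mem_map.2 (univ_mem' fun i ↦ ⟨hν_mass i, hν_supp i⟩))
  refine ⟨τ, hτ, .of l, Ultrafilter.of_le l, fun g hg ↦ ?_⟩
  obtain ⟨G, hG⟩ := exists_boundedContinuousFunction_eqOn hK hg
  have integral_eq {ρ : FiniteMeasure E} (hρ : ρ Kᶜ = 0) :
      ∫ ξ, G ξ ∂(ρ : Measure E) = ∫ ξ, g ξ ∂(ρ : Measure E) := by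
    refine integral_congr_ae ?_
    have : ∀ᵐ ξ ∂(ρ : Measure E), ξ ∈ K := (ρ.null_iff_toMeasure_null _).1 hρ
    filter_upwards [this] with ξ hξ using hG hξ
  simpa only [integral_eq hτ, integral_eq (hν_supp _)] using
    FiniteMeasure.tendsto_iff_forall_integral_tendsto.1 hlim G

end WeakCompactness

section RadialFilter

/-- The filter of radial approach `r z`, `r → 1⁻`, to a boundary point `z` of the unit disk. -/
def radialFilter (z : ℂ) : Filter ℂ := (𝓝[<] (1 : ℝ)).map fun r : ℝ ↦ (r : ℂ) * z

instance neBot_radialFilter (z : ℂ) : (radialFilter z).NeBot := map_neBot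

lemma eventually_radialFilter_of_forall {z : ℂ} {p : ℂ → Prop}
    (h : ∀ r : ℝ, 0 < r → r < 1 → p (r * z)) : ∀ᶠ w in radialFilter z, p w :=
  eventually_map.2 <| mem_of_superset (Ioo_mem_nhdsLT one_pos) fun r hr ↦ h r hr.1 hr.2

lemma norm_ofReal_mul_lt_one {z : ℂ} (hz : ‖z‖ = 1) {r : ℝ} (hr0 : 0 < r) (hr1 : r < 1) :
    ‖(r * z : ℂ)‖ < 1 := by
  rwa [norm_mul, hz, mul_one, norm_real, Real.norm_of_nonneg hr0.le]

lemma eventually_norm_lt_one {z : ℂ} (hz : ‖z‖ = 1) : ∀ᶠ w in radialFilter z, ‖w‖ < 1 :=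
  eventually_radialFilter_of_forall fun _ ↦ norm_ofReal_mul_lt_one hz

end RadialFilter

section PoissonKernel

variable {w z ξ : ℂ} {r : ℝ}

lemma one_sub_norm_le_norm_sub (hξ : ‖ξ‖ = 1) : 1 - ‖w‖ ≤ ‖ξ - w‖ :=
  hξ ▸ norm_sub_norm_le ξ w

lemma norm_sub_ofReal_mul_sq (hz : ‖z‖ = 1) (hξ : ‖ξ‖ = 1) (r : ℝ) :
    ‖ξ - r * z‖ ^ 2 = (1 - r) ^ 2 + r * ‖ξ - z‖ ^ 2 := by
  have hz' : z.re ^ 2 + z.im ^ 2 = 1 := by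
    rw [← normSq_add_mul_I, re_add_im, normSq_eq_norm_sq, hz, one_pow]
  have hξ' : ξ.re ^ 2 + ξ.im ^ 2 = 1 := by
    rw [← normSq_add_mul_I, re_add_im, normSq_eq_norm_sq, hξ, one_pow]
  simp only [← normSq_eq_norm_sq, normSq_apply, sub_re, sub_im, re_ofReal_mul, im_ofReal_mul]
  linear_combination (1 - r) * hξ' + (r ^ 2 - r) * hz'

lemma norm_sub_le_two_mul_norm_sub_ofReal_mul (hz : ‖z‖ = 1) (hξ : ‖ξ‖ = 1) (hr0 : 0 < r)
    (hr1 : r < 1) : ‖ξ - z‖ ≤ 2 * ‖ξ - r * z‖ := by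
  have hnorm : ‖(r * z : ℂ)‖ = r := by
    rw [norm_mul, hz, mul_one, norm_real, Real.norm_of_nonneg hr0.le]
  have hdist : ‖(r * z : ℂ) - z‖ = 1 - r := by
    rw [← sub_one_mul, norm_mul, hz, mul_one, ← ofReal_one, ← ofReal_sub, norm_real,
      Real.norm_of_nonpos (by linarith), neg_sub]
  calc ‖ξ - z‖ ≤ ‖ξ - r * z‖ + ‖r * z - z‖ := norm_sub_le_norm_sub_add_norm_sub _ _ _
    _ ≤ ‖ξ - r * z‖ + ‖ξ - r * z‖ := by
        gcongr
        simpa only [hdist, hnorm] using one_sub_norm_le_norm_sub (w := r * z) hξ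
    _ = 2 * ‖ξ - r * z‖ := (two_mul _).symm

lemma poissonKernel_nonneg (hξ : ‖ξ‖ = 1) (hw : ‖w‖ < 1) : 0 ≤ poissonKernel 0 w ξ := by
  have : ‖w‖ ^ 2 ≤ 1 := pow_le_one₀ (norm_nonneg w) hw.le
  simp only [poissonKernel_def, sub_zero, hξ, one_pow]
  exact div_nonneg (by linarith) (by positivity)

lemma poissonKernel_ofReal_mul (hz : ‖z‖ = 1) (hξ : ‖ξ‖ = 1) (r : ℝ) :
    poissonKernel 0 (r * z) ξ = (1 - r ^ 2) / ((1 - r) ^ 2 + r * ‖ξ - z‖ ^ 2) := by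
  simp only [poissonKernel_def, ← norm_sub_ofReal_mul_sq hz hξ, sub_zero, norm_mul, hz, hξ,
    norm_real, Real.norm_eq_abs, sq_abs, mul_one, one_pow]

lemma exists_forall_lt_poissonKernel_iff_dist_lt (hz : ‖z‖ = 1) (hr0 : 0 < r) (hr1 : r < 1)
    {s : ℝ} (hs : 0 < s) :
    ∃ t : ℝ, ∀ ξ : ℂ, ‖ξ‖ = 1 → (s < poissonKernel 0 (r * z) ξ ↔ dist ξ z < t) := by
  refine ⟨√(((1 - r ^ 2) / s - (1 - r) ^ 2) / r), fun ξ hξ ↦ ?_⟩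
  have hpos : 0 < (1 - r) ^ 2 + r * ‖ξ - z‖ ^ 2 :=
    add_pos_of_pos_of_nonneg (pow_pos (sub_pos.2 hr1) 2) (by positivity)
  rw [poissonKernel_ofReal_mul hz hξ, dist_eq_norm, Real.lt_sqrt (norm_nonneg _),
    lt_div_iff₀' hr0, lt_sub_iff_add_lt', lt_div_iff₀' hs, lt_div_iff₀ hpos]

lemma poissonKernel_le_of_le_dist (hz : ‖z‖ = 1) (hξ : ‖ξ‖ = 1) (hr0 : 0 < r) (hr1 : r < 1)
    {δ : ℝ} (hδ : 0 < δ) (hδξ : δ ≤ dist ξ z) :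
    poissonKernel 0 (r * z) ξ ≤ (1 - r ^ 2) / (r * δ ^ 2) := by
  have hr2 : 0 ≤ 1 - r ^ 2 := sub_nonneg.2 (pow_le_one₀ hr0.le hr1.le)
  rw [poissonKernel_ofReal_mul hz hξ]
  gcongr
  calc r * δ ^ 2 ≤ r * ‖ξ - z‖ ^ 2 := by
        rw [← dist_eq_norm]
        gcongr
    _ ≤ (1 - r) ^ 2 + r * ‖ξ - z‖ ^ 2 := le_add_of_nonneg_left (sq_nonneg _)

lemma measurable_poissonKernel (w : ℂ) : Measurable (poissonKernel 0 w) := by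
  simp only [poissonKernel_eq_re_herglotzRieszKernel, herglotzRieszKernel_fun_def]
  fun_prop

lemma continuousOn_poissonKernel_sphere (hw : ‖w‖ < 1) :
    ContinuousOn (poissonKernel 0 w) (sphere 0 1) := by
  rw [poissonKernel_eq_re_herglotzRieszKernel]
  simpa only [abs_one] using continuous_re.comp_continuousOn
    (continuousOn_herglotzRieszKernel_sphere (mem_ball_zero_iff.2 hw))

end PoissonKernel

section CauchyKernel

variable {w ξ : ℂ}

/-- The kernel of the Cauchy transform in the unit disk. -/
noncomputable def cauchyKernel (w ξ : ℂ) : ℂ := (1 - conj ξ * w)⁻¹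

lemma measurable_cauchyKernel (w : ℂ) : Measurable (cauchyKernel w) := by
  unfold cauchyKernel
  fun_prop

lemma cauchyKernel_eq_div (hξ : ‖ξ‖ = 1) (w : ℂ) : cauchyKernel w ξ = ξ / (ξ - w) := by
  have hξ0 : ξ ≠ 0 := norm_pos_iff.1 (hξ ▸ one_pos)
  rw [cauchyKernel, ← inv_eq_conj hξ, ← inv_div, sub_div, div_self hξ0, inv_mul_eq_div]

lemma norm_cauchyKernel (hξ : ‖ξ‖ = 1) (w : ℂ) : ‖cauchyKernel w ξ‖ = ‖ξ - w‖⁻¹ := by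
  rw [cauchyKernel_eq_div hξ, norm_div, hξ, one_div]

lemma norm_cauchyKernel_le (hξ : ‖ξ‖ = 1) (hw : ‖w‖ < 1) : ‖cauchyKernel w ξ‖ ≤ (1 - ‖w‖)⁻¹ := by
  rw [norm_cauchyKernel hξ]
  exact inv_anti₀ (sub_pos.2 hw) (one_sub_norm_le_norm_sub hξ)

lemma two_mul_re_cauchyKernel (hξ : ‖ξ‖ = 1) (hw : ‖w‖ < 1) :
    2 * (cauchyKernel w ξ).re = poissonKernel 0 w ξ + 1 := by
  have hξw : ξ - w ≠ 0 := norm_pos_iff.1 ((sub_pos.2 hw).trans_le (one_sub_norm_le_norm_sub hξ))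
  have kernel_eq : 2 * cauchyKernel w ξ = herglotzRieszKernel 0 w ξ + 1 := by
    rw [cauchyKernel_eq_div hξ, herglotzRieszKernel_def, sub_zero, sub_zero]
    field_simp
    ring
  simpa [poissonKernel_eq_re_herglotzRieszKernel] using congr(($kernel_eq).re)

end CauchyKernel

section PoissonIntegral

variable {σ τ μ ν : Measure ℂ} {w z : ℂ}

/-- The Poisson integral of a measure on the unit circle, with values in `ℝ≥0∞` so that it makes
sense without integrability assumptions. -/
noncomputable def poissonIntegral (σ : Measure ℂ) (w : ℂ) : ℝ≥0∞ :=
  ∫⁻ ξ, ENNReal.ofReal (poissonKernel 0 w ξ) ∂σ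

lemma ae_norm_eq_one_iff {E : Type*} [SeminormedAddCommGroup E] [MeasurableSpace E]
    {σ : Measure E} : (∀ᵐ ξ ∂σ, ‖ξ‖ = 1) ↔ σ (sphere 0 1)ᶜ = 0 := by
  rw [← mem_ae_iff]
  simp only [Filter.Eventually, sphere, dist_zero_right]

lemma poissonIntegral_mono (h : μ ≤ ν) (w : ℂ) : poissonIntegral μ w ≤ poissonIntegral ν w :=
  lintegral_mono' h le_rfl

lemma integrable_of_continuousOn_of_ae_mem {α E : Type*} [TopologicalSpace α] [T2Space α]
    [MeasurableSpace α] [OpensMeasurableSpace α] [NormedAddCommGroup E]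
    {μ : Measure α} [IsFiniteMeasureOnCompacts μ] {K : Set α} (hK : IsCompact K)
    (hμ : ∀ᵐ ξ ∂μ, ξ ∈ K) {g : α → E} (hg : ContinuousOn g K) :
    Integrable g μ :=
  Measure.restrict_eq_self_of_ae_mem hμ ▸ (hg.integrableOn_compact hK)

lemma integrable_poissonKernel [IsFiniteMeasure σ] (hσ : ∀ᵐ ξ ∂σ, ‖ξ‖ = 1) (hw : ‖w‖ < 1) :
    Integrable (poissonKernel 0 w) σ :=
  integrable_of_continuousOn_of_ae_mem (isCompact_sphere 0 1)
    (by simpa only [mem_sphere_zero_iff_norm] using hσ) (continuousOn_poissonKernel_sphere hw)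

lemma poissonIntegral_eq_ofReal_integral [IsFiniteMeasure σ] (hσ : ∀ᵐ ξ ∂σ, ‖ξ‖ = 1)
    (hw : ‖w‖ < 1) : poissonIntegral σ w = ENNReal.ofReal (∫ ξ, poissonKernel 0 w ξ ∂σ) :=
  (ofReal_integral_eq_lintegral_ofReal (integrable_poissonKernel hσ hw)
    (hσ.mono fun _ hξ ↦ poissonKernel_nonneg hξ hw)).symm

lemma poissonIntegral_zero (hσ : ∀ᵐ ξ ∂σ, ‖ξ‖ = 1) : poissonIntegral σ 0 = σ univ := by
  rw [poissonIntegral, ← lintegral_one]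
  refine lintegral_congr_ae (hσ.mono fun ξ hξ ↦ ?_)
  simp [poissonKernel_def, hξ]

lemma poissonIntegral_le_mul_of_ball {C : ℝ≥0∞} (hμ : ∀ᵐ ξ ∂μ, ‖ξ‖ = 1)
    (hν : ∀ᵐ ξ ∂ν, ‖ξ‖ = 1) (hz : ‖z‖ = 1) (hC : ∀ t, ν (ball z t) ≤ C * μ (ball z t))
    {r : ℝ} (hr0 : 0 < r) (hr1 : r < 1) :
    poissonIntegral ν (r * z) ≤ C * poissonIntegral μ (r * z) := by
  refine lintegral_ofReal_le_mul_of_meas_lt_le (measurable_poissonKernel _) fun s hs ↦ ?_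
  obtain ⟨t, ht⟩ := exists_forall_lt_poissonKernel_iff_dist_lt hz hr0 hr1 hs
  have superlevel_eq_ball {ρ : Measure ℂ} (hρ : ∀ᵐ ξ ∂ρ, ‖ξ‖ = 1) :
      ρ {ξ | s < poissonKernel 0 (r * z) ξ} = ρ (ball z t) :=
    measure_congr (hρ.mono fun ξ hξ ↦ propext (ht ξ hξ))
  rw [superlevel_eq_ball hμ, superlevel_eq_ball hν]
  exact hC t

lemma poissonIntegral_restrict_compl_ball_le (hν : ∀ᵐ ξ ∂ν, ‖ξ‖ = 1) (hz : ‖z‖ = 1) {δ : ℝ}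
    (hδ : 0 < δ) {r : ℝ} (hr0 : 0 < r) (hr1 : r < 1) :
    poissonIntegral (ν.restrict (ball z δ)ᶜ) (r * z) ≤
      ENNReal.ofReal ((1 - r ^ 2) / (r * δ ^ 2)) * ν univ := by
  calc poissonIntegral (ν.restrict (ball z δ)ᶜ) (r * z)
      ≤ ∫⁻ _ in (ball z δ)ᶜ, ENNReal.ofReal ((1 - r ^ 2) / (r * δ ^ 2)) ∂ν := by
        refine setLIntegral_mono_ae measurable_const.aemeasurable (hν.mono fun ξ hξ hξδ ↦ ?_)
        exact ENNReal.ofReal_le_ofReal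
          (poissonKernel_le_of_le_dist hz hξ hr0 hr1 hδ (not_lt.1 hξδ))
    _ ≤ ENNReal.ofReal ((1 - r ^ 2) / (r * δ ^ 2)) * ν univ := by
        rw [setLIntegral_const]
        gcongr
        exact subset_univ _

lemma poissonIntegral_le_mul_add_of_closedBall {C : ℝ≥0∞} (hμ : ∀ᵐ ξ ∂μ, ‖ξ‖ = 1)
    (hν : ∀ᵐ ξ ∂ν, ‖ξ‖ = 1) (hz : ‖z‖ = 1) {δ : ℝ} (hδ : 0 < δ)
    (hC : ∀ t ∈ Ioo 0 δ, ν (closedBall z t) ≤ C * μ (closedBall z t))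
    {r : ℝ} (hr0 : 0 < r) (hr1 : r < 1) :
    poissonIntegral ν (r * z) ≤
      C * poissonIntegral μ (r * z) + ENNReal.ofReal ((1 - r ^ 2) / (r * δ ^ 2)) * ν univ := by
  have ball_le (t : ℝ) : ν.restrict (ball z δ) (ball z t) ≤ C * μ (ball z t) := by
    have ball_inter : ball z t ∩ ball z δ = ball z (min t δ) := by
      ext ξ
      simp only [mem_inter_iff, mem_ball, lt_min_iff]
    rw [Measure.restrict_apply measurableSet_ball, ball_inter]
    refine (measure_ball_le_mul_of_closedBall hC (min_le_right t δ)).trans ?_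
    gcongr
    exact min_le_left t δ
  calc poissonIntegral ν (r * z)
      = poissonIntegral (ν.restrict (ball z δ)) (r * z) +
          poissonIntegral (ν.restrict (ball z δ)ᶜ) (r * z) :=
        (lintegral_add_compl _ measurableSet_ball).symm
    _ ≤ _ := add_le_add
        (poissonIntegral_le_mul_of_ball hμ (ae_restrict_of_ae hν) hz ball_le hr0 hr1)
        (poissonIntegral_restrict_compl_ball_le hν hz hδ hr0 hr1)

lemma eventually_poissonIntegral_le_mul_add [IsFiniteMeasure ν] {C : ℝ≥0∞}
    (hμ : ∀ᵐ ξ ∂μ, ‖ξ‖ = 1) (hν : ∀ᵐ ξ ∂ν, ‖ξ‖ = 1) (hz : ‖z‖ = 1) {δ : ℝ} (hδ : 0 < δ)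
    (hC : ∀ t ∈ Ioo 0 δ, ν (closedBall z t) ≤ C * μ (closedBall z t)) {ε : ℝ≥0∞} (hε : ε ≠ 0) :
    ∀ᶠ w in radialFilter z, poissonIntegral ν w ≤ C * poissonIntegral μ w + ε := by
  have tail_lim : Tendsto (fun r : ℝ ↦ ENNReal.ofReal ((1 - r ^ 2) / (r * δ ^ 2)) * ν univ)
      (𝓝[<] 1) (𝓝 0) := by
    have hcont : ContinuousAt (fun r : ℝ ↦ (1 - r ^ 2) / (r * δ ^ 2)) 1 :=
      ContinuousAt.div (by fun_prop) (by fun_prop) (by positivity)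
    simpa using ENNReal.Tendsto.mul_const
      (ENNReal.tendsto_ofReal (hcont.tendsto.mono_left nhdsWithin_le_nhds))
      (.inr (measure_ne_top ν univ))
  refine eventually_map.2 ?_
  filter_upwards [tail_lim.eventually_le_const hε.bot_lt, Ioo_mem_nhdsLT one_pos] with r hr hr01
  exact (poissonIntegral_le_mul_add_of_closedBall hμ hν hz hδ hC hr01.1 hr01.2).trans
    (add_le_add_right hr _)

lemma ae_forall_rnDeriv_lt_eventually_poissonIntegral_le [IsFiniteMeasure σ] [IsFiniteMeasure τ]
    (hσ : ∀ᵐ ξ ∂σ, ‖ξ‖ = 1) (hτ : ∀ᵐ ξ ∂τ, ‖ξ‖ = 1) :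
    ∀ᵐ z ∂σ, ∀ C : ℝ≥0, τ.rnDeriv σ z < C → ∀ ε : ℝ≥0∞, ε ≠ 0 →
      ∀ᶠ w in radialFilter z, poissonIntegral τ w ≤ C * poissonIntegral σ w + ε := by
  filter_upwards [ae_forall_rnDeriv_lt_exists_closedBall_le τ σ, hσ] with z hz_ball hz C hC ε hε
  obtain ⟨δ, hδ, hball⟩ := hz_ball C hC
  exact eventually_poissonIntegral_le_mul_add hσ hτ hz hδ hball hε

lemma ae_limsup_poissonIntegral_div_le_rnDeriv [IsFiniteMeasure σ] [IsFiniteMeasure τ]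
    (hσ : ∀ᵐ ξ ∂σ, ‖ξ‖ = 1) (hτ : ∀ᵐ ξ ∂τ, ‖ξ‖ = 1) :
    ∀ᵐ z ∂σ, Tendsto (poissonIntegral σ) (radialFilter z) (𝓝 ⊤) →
      limsup (fun w ↦ poissonIntegral τ w / poissonIntegral σ w) (radialFilter z) ≤
        τ.rnDeriv σ z := by
  filter_upwards [ae_forall_rnDeriv_lt_eventually_poissonIntegral_le hσ hτ] with z hz htop
  refine le_of_forall_gt_imp_ge_of_dense fun D hD ↦ ?_
  obtain ⟨C, hC, hCD⟩ := ENNReal.lt_iff_exists_nnreal_btwn.1 hD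
  have bound_lim : Tendsto (fun w ↦ C + (poissonIntegral σ w)⁻¹) (radialFilter z) (𝓝 C) := by
    simpa using (tendsto_const_nhds (x := (C : ℝ≥0∞))).add (tendsto_inv_iff.2 htop)
  refine le_trans ?_ hCD.le
  rw [← bound_lim.limsup_eq]
  refine limsup_le_limsup ((hz C hC 1 one_ne_zero).mono fun w hw ↦ ?_)
  calc poissonIntegral τ w / poissonIntegral σ w
      ≤ (C * poissonIntegral σ w + 1) / poissonIntegral σ w := by gcongr
    _ = C * (poissonIntegral σ w / poissonIntegral σ w) + (poissonIntegral σ w)⁻¹ := by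
        rw [ENNReal.add_div, mul_div_assoc, one_div]
    _ ≤ C + (poissonIntegral σ w)⁻¹ := by
        gcongr
        exact mul_le_of_le_one_right' ENNReal.div_self_le_one

end PoissonIntegral

section CircleHaar

variable {w : ℂ}

instance isProbabilityMeasure_circleHaar : IsProbabilityMeasure circleHaar where
  measure_univ := by
    rw [circleHaar, Measure.smul_apply, Measure.map_apply (measurable_circleMap 0 1) .univ,
      preimage_univ, Measure.restrict_apply_univ, Real.volume_Ioc, sub_zero, smul_eq_mul,
      ← ENNReal.ofReal_mul (by positivity), inv_mul_cancel₀ (by positivity), ENNReal.ofReal_one]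

lemma ae_circleHaar_norm_eq_one : ∀ᵐ ξ ∂circleHaar, ‖ξ‖ = 1 := by
  refine Measure.ae_smul_measure ((ae_map_iff ?_ ?_).2 ?_) _
  · exact (measurable_circleMap 0 1).aemeasurable
  · exact measurableSet_eq_fun measurable_norm measurable_const
  · exact .of_forall fun θ ↦ by simp

lemma integral_circleHaar {E : Type*} [NormedAddCommGroup E] [NormedSpace ℝ E] {g : ℂ → E}
    (hg : AEStronglyMeasurable g circleHaar) :
    ∫ ξ, g ξ ∂circleHaar = Real.circleAverage g 0 1 := by
  have hg_map : AEStronglyMeasurable g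
      ((volume.restrict (Ioc 0 (2 * Real.pi))).map (circleMap 0 1)) :=
    hg.mono_ac (Measure.absolutelyContinuous_smul (ENNReal.ofReal_pos.2 (by positivity)).ne')
  rw [circleHaar, integral_smul_measure,
    integral_map (measurable_circleMap 0 1).aemeasurable hg_map, Real.circleAverage_def,
    intervalIntegral.integral_of_le (by positivity), ENNReal.toReal_ofReal (by positivity)]

lemma poissonIntegral_circleHaar (hw : ‖w‖ < 1) : poissonIntegral circleHaar w = 1 := by
  have one_harmonic : HarmonicOnNhd (1 : ℂ → ℝ) (closedBall 0 1) :=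
    fun _ _ ↦ harmonicAt_const _
  have circleAverage_eq : Real.circleAverage (poissonKernel 0 w) 0 1 = 1 := by
    simpa only [smul_eq_mul, mul_one, Pi.one_apply] using
      one_harmonic.circleAverage_poissonKernel_smul (mem_ball_zero_iff.2 hw)
  rw [poissonIntegral_eq_ofReal_integral ae_circleHaar_norm_eq_one hw,
    integral_circleHaar (measurable_poissonKernel w).aestronglyMeasurable, circleAverage_eq,
    ENNReal.ofReal_one]

/-- A measure singular to Lebesgue measure `m` has `dm/dσ = 0` almost everywhere, so `P_m ≡ 1` is
negligible compared to `P_σ`. -/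
lemma ae_tendsto_poissonIntegral_top_of_mutuallySingular {σ : Measure ℂ} [IsFiniteMeasure σ]
    (hσ : ∀ᵐ ξ ∂σ, ‖ξ‖ = 1) (hsing : σ ⟂ₘ circleHaar) :
    ∀ᵐ z ∂σ, Tendsto (poissonIntegral σ) (radialFilter z) (𝓝 ⊤) := by
  filter_upwards [ae_forall_rnDeriv_lt_eventually_poissonIntegral_le hσ ae_circleHaar_norm_eq_one,
    hsing.symm.rnDeriv_ae_eq_zero, hσ] with z hz hderiv hz1
  refine ENNReal.tendsto_nhds_top_iff_nnreal.2 fun N ↦ ?_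
  have hC : circleHaar.rnDeriv σ z < ((2 * (N + 1))⁻¹ : ℝ≥0) := by
    rw [hderiv, Pi.zero_apply]
    positivity
  filter_upwards [hz _ hC (2⁻¹ : ℝ≥0) (by simp), eventually_norm_lt_one hz1] with w hle hw
  rw [poissonIntegral_circleHaar hw] at hle
  by_contra! hN
  have one_le : (1 : ℝ≥0∞) ≤ ((2 * (N + 1))⁻¹ : ℝ≥0) * N + (2⁻¹ : ℝ≥0) := hle.trans (by gcongr)
  norm_cast at one_le
  rw [← NNReal.coe_le_coe] at one_le
  push_cast at one_le
  field_simp at one_le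
  linarith

lemma ae_singularPart_tendsto_poissonIntegral_top {σ : Measure ℂ} [IsFiniteMeasure σ]
    (hσ : ∀ᵐ ξ ∂σ, ‖ξ‖ = 1) :
    ∀ᵐ z ∂(σ.singularPart circleHaar),
      Tendsto (poissonIntegral σ) (radialFilter z) (𝓝 ⊤) := by
  have singularPart_le := Measure.singularPart_le σ circleHaar
  filter_upwards [ae_tendsto_poissonIntegral_top_of_mutuallySingular
    (ae_mono singularPart_le hσ) (Measure.mutuallySingular_singularPart σ circleHaar)] with z hz
  exact tendsto_nhds_top_mono' hz (poissonIntegral_mono singularPart_le)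

end CircleHaar

section HerglotzRepresentation

variable {u v : ℂ → ℝ} {w : ℂ}

lemma harmonicOnNhd_comp_ofReal_mul (hu : HarmonicOnNhd u (ball 0 1)) {ρ : ℝ} (hρ0 : 0 ≤ ρ)
    (hρ1 : ρ < 1) : HarmonicOnNhd (fun z ↦ u (ρ * z)) (closedBall 0 1) := by
  intro z hz
  obtain ⟨F, hF, hFu⟩ := hu.exists_analyticOnNhd_ball_re_eq
  have mul_mem : (ρ * z : ℂ) ∈ ball 0 1 := by
    rw [mem_ball_zero_iff, norm_mul, norm_real, Real.norm_of_nonneg hρ0]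
    exact mul_lt_one_of_nonneg_of_lt_one_left hρ0 hρ1 (mem_closedBall_zero_iff.1 hz)
  have hmul : ContinuousAt (fun z : ℂ ↦ ρ * z) z := by fun_prop
  refine (harmonicAt_congr_nhds ?_).1
    (AnalyticAt.fun_comp (f := fun z : ℂ ↦ ρ * z) (hF _ mul_mem) (by fun_prop)).harmonicAt_re
  filter_upwards [hmul.preimage_mem_nhds (isOpen_ball.mem_nhds mul_mem)] with ζ hζ using hFu hζ

lemma exists_finiteMeasure_integral_poissonKernel_eq (hv : HarmonicOnNhd v (closedBall 0 1))
    (hv0 : ∀ ξ, ‖ξ‖ = 1 → 0 ≤ v ξ) :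
    ∃ ν : FiniteMeasure ℂ, ν (sphere 0 1)ᶜ = 0 ∧
      ∀ w, ‖w‖ < 1 → ∫ ξ, poissonKernel 0 w ξ ∂(ν : Measure ℂ) = v w := by
  have ae_mem : ∀ᵐ ξ ∂circleHaar, ξ ∈ sphere (0 : ℂ) 1 := by
    simpa only [mem_sphere_zero_iff_norm] using ae_circleHaar_norm_eq_one
  have hv_int : Integrable v circleHaar :=
    integrable_of_continuousOn_of_ae_mem (isCompact_sphere 0 1) ae_mem
      (hv.continuousOn.mono sphere_subset_closedBall)
  refine ⟨⟨circleHaar.withDensity fun ξ ↦ ENNReal.ofReal (v ξ),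
    isFiniteMeasure_withDensity_ofReal hv_int.2⟩, ?_, fun w hw ↦ ?_⟩
  · exact (FiniteMeasure.null_iff_toMeasure_null _ _).2
      (withDensity_absolutelyContinuous _ _ ae_mem)
  calc ∫ ξ, poissonKernel 0 w ξ ∂circleHaar.withDensity (fun ξ ↦ ENNReal.ofReal (v ξ))
      = ∫ ξ, (poissonKernel 0 w • v) ξ ∂circleHaar := by
        rw [integral_withDensity_eq_integral_toReal_smul₀ hv_int.1.aemeasurable.ennreal_ofReal
          (.of_forall fun _ ↦ ENNReal.ofReal_lt_top)]
        refine integral_congr_ae (ae_circleHaar_norm_eq_one.mono fun ξ hξ ↦ ?_)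
        simp only [ENNReal.toReal_ofReal (hv0 ξ hξ), Pi.smul_apply', smul_eq_mul, mul_comm]
    _ = Real.circleAverage (poissonKernel 0 w • v) 0 1 := integral_circleHaar
        ((measurable_poissonKernel w).aestronglyMeasurable.smul hv_int.1)
    _ = v w := hv.circleAverage_poissonKernel_smul (mem_ball_zero_iff.2 hw)

lemma mass_eq_integral_poissonKernel_zero {ν : FiniteMeasure ℂ} (hν : ν (sphere 0 1)ᶜ = 0) :
    ν.mass = ∫ ξ, poissonKernel 0 0 ξ ∂(ν : Measure ℂ) := by
  have ae_norm_eq_one : ∀ᵐ ξ ∂(ν : Measure ℂ), ‖ξ‖ = 1 :=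
    ae_norm_eq_one_iff.2 ((ν.null_iff_toMeasure_null _).1 hν)
  have kernel_eq_one : poissonKernel 0 0 =ᵐ[(ν : Measure ℂ)] fun _ ↦ 1 :=
    ae_norm_eq_one.mono fun ξ hξ ↦ by simp [poissonKernel_def, hξ]
  rw [integral_congr_ae kernel_eq_one, integral_const, smul_eq_mul, mul_one]
  rfl

/-- The representing measure is a weak limit of the densities `u (ρ ·)` on the circle as `ρ → 1⁻`;
these all have mass `u 0`. -/
theorem exists_poissonIntegral_eq_of_harmonicOnNhd (hu : HarmonicOnNhd u (ball 0 1))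
    (hu0 : ∀ w, ‖w‖ < 1 → 0 ≤ u w) :
    ∃ τ : Measure ℂ, IsFiniteMeasure τ ∧ (∀ᵐ ξ ∂τ, ‖ξ‖ = 1) ∧
      ∀ w, ‖w‖ < 1 → poissonIntegral τ w = ENNReal.ofReal (u w) := by
  obtain ⟨ρ, -, hρ, hρ_lim⟩ := exists_seq_strictMono_tendsto' (zero_lt_one (α := ℝ))
  have mul_lt (n : ℕ) {ξ : ℂ} (hξ : ‖ξ‖ = 1) : ‖(ρ n * ξ : ℂ)‖ < 1 :=
    norm_ofReal_mul_lt_one hξ (hρ n).1 (hρ n).2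
  choose ν hν_supp hν using fun n ↦ exists_finiteMeasure_integral_poissonKernel_eq
    (harmonicOnNhd_comp_ofReal_mul hu (hρ n).1.le (hρ n).2) fun ξ hξ ↦ hu0 _ (mul_lt n hξ)
  have hν_mass (n : ℕ) : (ν n).mass ≤ (u 0).toNNReal := by
    refine (Real.le_toNNReal_iff_coe_le (hu0 0 (by simp))).2 ?_
    simp [mass_eq_integral_poissonKernel_zero (hν_supp n), hν]
  obtain ⟨τ, hτ_supp, U, hU, hlim⟩ :=
    exists_ultrafilter_tendsto_integral (isCompact_sphere (0 : ℂ) 1) atTop hν_mass hν_supp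
  have hτ : ∀ᵐ ξ ∂(τ : Measure ℂ), ‖ξ‖ = 1 :=
    ae_norm_eq_one_iff.2 ((τ.null_iff_toMeasure_null _).1 hτ_supp)
  refine ⟨τ, inferInstance, hτ, fun w hw ↦ ?_⟩
  have integral_lim := hlim _ (continuousOn_poissonKernel_sphere hw)
  simp only [hν _ w hw] at integral_lim
  have u_lim : Tendsto (fun n ↦ u (ρ n * w)) atTop (𝓝 (u w)) := by
    have mul_lim : Tendsto (fun n ↦ (ρ n * w : ℂ)) atTop (𝓝 w) := by
      simpa using ((continuous_ofReal.tendsto 1).comp hρ_lim).mul_const w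
    have u_cont : ContinuousAt u w :=
      hu.continuousOn.continuousAt (isOpen_ball.mem_nhds (mem_ball_zero_iff.2 hw))
    exact u_cont.tendsto.comp mul_lim
  rw [poissonIntegral_eq_ofReal_integral hτ hw,
    tendsto_nhds_unique integral_lim (u_lim.mono_left hU)]

end HerglotzRepresentation

section CauchyTransform

variable {σ : Measure ℂ} {g h : ℂ → ℂ} {w z : ℂ}

/-- The Cauchy transform `𝒦_{gσ}` of the complex measure `g dσ` in the unit disk. -/
noncomputable def cauchyTransform (σ : Measure ℂ) (g : ℂ → ℂ) (w : ℂ) : ℂ :=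
  ∫ ξ, g ξ * cauchyKernel w ξ ∂σ

lemma integrable_mul_cauchyKernel (hσ : ∀ᵐ ξ ∂σ, ‖ξ‖ = 1) (hg : Integrable g σ) (hw : ‖w‖ < 1) :
    Integrable (fun ξ ↦ g ξ * cauchyKernel w ξ) σ :=
  hg.mul_bdd (measurable_cauchyKernel w).aestronglyMeasurable
    (hσ.mono fun _ hξ ↦ norm_cauchyKernel_le hξ hw)

lemma cauchyTransform_zero (σ : Measure ℂ) (g : ℂ → ℂ) : cauchyTransform σ g 0 = ∫ ξ, g ξ ∂σ := by
  simp [cauchyTransform, cauchyKernel]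

lemma cauchyTransform_const_mul (σ : Measure ℂ) (c : ℂ) (g : ℂ → ℂ) (w : ℂ) :
    cauchyTransform σ (fun ξ ↦ c * g ξ) w = c * cauchyTransform σ g w := by
  simp only [cauchyTransform, mul_assoc, integral_const_mul]

lemma cauchyTransform_add (hσ : ∀ᵐ ξ ∂σ, ‖ξ‖ = 1) (hg : Integrable g σ) (hh : Integrable h σ)
    (hw : ‖w‖ < 1) :
    cauchyTransform σ (g + h) w = cauchyTransform σ g w + cauchyTransform σ h w := by
  simp only [cauchyTransform, Pi.add_apply, add_mul]
  exact integral_add (integrable_mul_cauchyKernel hσ hg hw) (integrable_mul_cauchyKernel hσ hh hw)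

lemma hasDerivAt_cauchyKernel {ξ : ℂ} (hξ : ‖ξ‖ = 1) (hw : ‖w‖ < 1) :
    HasDerivAt (cauchyKernel · ξ) (conj ξ * cauchyKernel w ξ ^ 2) w := by
  have hne : 1 - conj ξ * w ≠ 0 := by
    refine sub_ne_zero.2 fun heq ↦ hw.ne ?_
    simpa [hξ] using congr(‖$heq‖).symm
  refine ((((hasDerivAt_id w).const_mul (conj ξ)).const_sub 1).inv hne).congr_deriv ?_
  simp only [cauchyKernel, id_eq, mul_one, neg_neg, inv_pow, div_eq_mul_inv]

lemma differentiableOn_cauchyTransform (hσ : ∀ᵐ ξ ∂σ, ‖ξ‖ = 1) (hg : Integrable g σ) :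
    DifferentiableOn ℂ (cauchyTransform σ g) (ball 0 1) := by
  intro w₀ hw₀
  obtain ⟨r, hw₀r, hr⟩ := exists_between (mem_ball_zero_iff.1 hw₀)
  have deriv_le : ∀ᵐ ξ ∂σ, ∀ w ∈ ball (0 : ℂ) r,
      ‖g ξ * (conj ξ * cauchyKernel w ξ ^ 2)‖ ≤ ‖g ξ‖ * ((1 - r)⁻¹) ^ 2 := by
    filter_upwards [hσ] with ξ hξ w hw
    have hwr : ‖w‖ < r := mem_ball_zero_iff.1 hw
    rw [norm_mul, norm_mul, norm_pow, norm_conj, hξ, one_mul]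
    gcongr
    exact (norm_cauchyKernel_le hξ (hwr.trans hr)).trans
      (inv_anti₀ (sub_pos.2 hr) (sub_le_sub_left hwr.le 1))
  have hmeas (w : ℂ) : AEStronglyMeasurable (cauchyKernel w) σ :=
    (measurable_cauchyKernel w).aestronglyMeasurable
  refine (hasDerivAt_integral_of_dominated_loc_of_deriv_le
    (isOpen_ball.mem_nhds (mem_ball_zero_iff.2 hw₀r))
    (.of_forall fun w ↦ hg.1.mul (hmeas w))
    (integrable_mul_cauchyKernel hσ hg (mem_ball_zero_iff.1 hw₀))
    (hg.1.mul (continuous_conj.aestronglyMeasurable.mul ((hmeas w₀).pow 2))) deriv_le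
    (hg.norm.mul_const _) ?_).2.differentiableAt.differentiableWithinAt
  filter_upwards [hσ] with ξ hξ w hw
  exact (hasDerivAt_cauchyKernel hξ ((mem_ball_zero_iff.1 hw).trans hr)).const_mul (g ξ)

lemma re_cauchyTransform_nonneg (hσ : ∀ᵐ ξ ∂σ, ‖ξ‖ = 1) {g : ℂ → ℝ} (hg0 : ∀ ξ, 0 ≤ g ξ)
    (hg : Integrable g σ) (hw : ‖w‖ < 1) : 0 ≤ (cauchyTransform σ (fun ξ ↦ g ξ) w).re := by
  have re_eq := integral_re (integrable_mul_cauchyKernel hσ hg.ofReal hw)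
  simp only [RCLike.re_to_complex] at re_eq
  refine le_of_le_of_eq (integral_nonneg_of_ae (hσ.mono fun ξ hξ ↦ ?_)) re_eq
  have kernel_nonneg : 0 ≤ (cauchyKernel w ξ).re := by
    linarith [two_mul_re_cauchyKernel hξ hw, poissonKernel_nonneg hξ hw]
  simpa using mul_nonneg (hg0 ξ) kernel_nonneg

variable [IsFiniteMeasure σ]

lemma two_mul_re_cauchyTransform_one (hσ : ∀ᵐ ξ ∂σ, ‖ξ‖ = 1) (hw : ‖w‖ < 1) :
    2 * (cauchyTransform σ 1 w).re = (∫ ξ, poissonKernel 0 w ξ ∂σ) + σ.real univ := by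
  have re_eq := integral_re (integrable_mul_cauchyKernel hσ (integrable_const 1) hw)
  simp only [RCLike.re_to_complex, one_mul] at re_eq
  calc 2 * (cauchyTransform σ 1 w).re = ∫ ξ, 2 * (cauchyKernel w ξ).re ∂σ := by
        simp only [integral_const_mul, re_eq, cauchyTransform, Pi.one_apply, one_mul]
    _ = ∫ ξ, (poissonKernel 0 w ξ + 1) ∂σ :=
        integral_congr_ae (hσ.mono fun _ hξ ↦ two_mul_re_cauchyKernel hξ hw)
    _ = (∫ ξ, poissonKernel 0 w ξ ∂σ) + σ.real univ := by
        rw [integral_add (integrable_poissonKernel hσ hw) (integrable_const 1), integral_const,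
          smul_eq_mul, mul_one]

lemma re_cauchyTransform_one_pos [NeZero σ] (hσ : ∀ᵐ ξ ∂σ, ‖ξ‖ = 1) (hw : ‖w‖ < 1) :
    0 < (cauchyTransform σ 1 w).re := by
  have integral_nonneg : 0 ≤ ∫ ξ, poissonKernel 0 w ξ ∂σ :=
    integral_nonneg_of_ae (hσ.mono fun _ hξ ↦ poissonKernel_nonneg hξ hw)
  linarith [two_mul_re_cauchyTransform_one hσ hw, measureReal_univ_pos (μ := σ)]

lemma poissonIntegral_le_ofReal_re_cauchyTransform_one (hσ : ∀ᵐ ξ ∂σ, ‖ξ‖ = 1) (hw : ‖w‖ < 1) :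
    poissonIntegral σ w ≤ ENNReal.ofReal (2 * (cauchyTransform σ 1 w).re) := by
  rw [poissonIntegral_eq_ofReal_integral hσ hw, two_mul_re_cauchyTransform_one hσ hw]
  exact ENNReal.ofReal_le_ofReal (le_add_of_nonneg_right measureReal_nonneg)

lemma tendsto_norm_cauchyTransform_one_atTop (hσ : ∀ᵐ ξ ∂σ, ‖ξ‖ = 1) (hz : ‖z‖ = 1)
    (htop : Tendsto (poissonIntegral σ) (radialFilter z) (𝓝 ⊤)) :
    Tendsto (fun w ↦ ‖cauchyTransform σ 1 w‖) (radialFilter z) atTop := by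
  have two_mul_lim : Tendsto (fun w ↦ ENNReal.ofReal (2 * (cauchyTransform σ 1 w).re))
      (radialFilter z) (𝓝 ⊤) :=
    tendsto_nhds_top_mono htop ((eventually_norm_lt_one hz).mono fun _ hw ↦
      poissonIntegral_le_ofReal_re_cauchyTransform_one hσ hw)
  have re_lim := (ENNReal.tendsto_ofReal_nhds_top.1 two_mul_lim).const_mul_atTop
    (inv_pos.2 two_pos)
  simp only [inv_mul_cancel_left₀ (two_ne_zero' ℝ)] at re_lim
  exact tendsto_atTop_mono (fun w ↦ re_le_norm _) re_lim

end CauchyTransform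

section Majorant

variable {σ : Measure ℂ} {g : ℂ → ℝ} {w : ℂ}

lemma norm_div_sq_mul_re_le {K₀ K₁ K₂ : ℂ} (hK₀ : 0 < K₀.re)
    (hquad : ∀ t : ℝ, 0 ≤ K₂.re - 2 * t * K₁.re + t ^ 2 * K₀.re) :
    ‖K₁ / K₀‖ ^ 2 * K₀.re ≤ 2 * (2 * K₂ - K₁ ^ 2 / K₀).re := by
  have hK₀_ne : K₀ ≠ 0 := fun h ↦ hK₀.ne' (by rw [h, zero_re])
  obtain ⟨φ, rfl⟩ : ∃ φ, K₁ = φ * K₀ := ⟨K₁ / K₀, (div_mul_cancel₀ K₁ hK₀_ne).symm⟩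
  have sq_div : (φ * K₀) ^ 2 / K₀ = φ * (φ * K₀) := by field_simp
  have quad_half := hquad (φ.re / 2)
  rw [mul_div_cancel_right₀ φ hK₀_ne, sq_div, ← normSq_eq_norm_sq, normSq_apply]
  simp only [mul_re, mul_im, sub_re, re_ofNat, im_ofNat] at quad_half ⊢
  nlinarith [mul_nonneg (sq_nonneg φ.im) hK₀.le]

/-- The normalized Cauchy transform `𝒦_{gσ} / 𝒦_σ`, whose radial limits are studied. -/
noncomputable def normalizedCauchyTransform (σ : Measure ℂ) (g : ℂ → ℂ) (w : ℂ) : ℂ :=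
  cauchyTransform σ g w / cauchyTransform σ 1 w

/-- The harmonic majorant `Re (2 𝒦_{g²σ} - 𝒦_{gσ}² / 𝒦_σ)`. Its positivity replaces a maximal
inequality. -/
noncomputable def harmonicMajorant (σ : Measure ℂ) (g : ℂ → ℝ) (w : ℂ) : ℝ :=
  (2 * cauchyTransform σ (fun ξ ↦ (g ξ : ℂ) ^ 2) w -
    cauchyTransform σ (fun ξ ↦ g ξ) w ^ 2 / cauchyTransform σ 1 w).re

lemma integrable_ofReal_sq {α : Type*} [MeasurableSpace α] {μ : Measure α} {g : α → ℝ}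
    (hg : MemLp g 2 μ) : Integrable (fun x ↦ (g x : ℂ) ^ 2) μ := by
  simpa only [RCLike.ofReal_pow] using! hg.integrable_sq.ofReal (𝕜 := ℂ)

lemma harmonicMajorant_zero_le (hg : MemLp g 2 σ) :
    ENNReal.ofReal (harmonicMajorant σ g 0) ≤ 2 * ∫⁻ ξ, ‖g ξ‖ₑ ^ 2 ∂σ := by
  have majorant_eq : harmonicMajorant σ g 0 =
      2 * ∫ ξ, g ξ ^ 2 ∂σ - (∫ ξ, g ξ ∂σ) ^ 2 / σ.real univ := by
    simp only [harmonicMajorant, cauchyTransform_zero, ← ofReal_pow, integral_complex_ofReal,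
      Pi.one_apply, integral_const, real_smul, mul_one, ← ofReal_div, sub_re, mul_re,
      re_ofNat, im_ofNat, zero_mul, sub_zero, ofReal_re]
  have lintegral_eq : ∫⁻ ξ, ‖g ξ‖ₑ ^ 2 ∂σ = ENNReal.ofReal (∫ ξ, g ξ ^ 2 ∂σ) := by
    rw [ofReal_integral_eq_lintegral_ofReal hg.integrable_sq (.of_forall fun _ ↦ sq_nonneg _)]
    simp only [← enorm_pow, Real.enorm_of_nonneg (sq_nonneg _)]
  calc ENNReal.ofReal (harmonicMajorant σ g 0)
      ≤ ENNReal.ofReal (2 * ∫ ξ, g ξ ^ 2 ∂σ) :=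
        ENNReal.ofReal_le_ofReal (majorant_eq ▸ sub_le_self _ (by positivity))
    _ = 2 * ∫⁻ ξ, ‖g ξ‖ₑ ^ 2 ∂σ := by
        rw [lintegral_eq, ENNReal.ofReal_mul zero_le_two, ENNReal.ofReal_ofNat]

variable [IsFiniteMeasure σ]

lemma re_cauchyTransform_quadratic_nonneg (hσ : ∀ᵐ ξ ∂σ, ‖ξ‖ = 1) (hg : MemLp g 2 σ)
    (hw : ‖w‖ < 1) (t : ℝ) :
    0 ≤ (cauchyTransform σ (fun ξ ↦ (g ξ : ℂ) ^ 2) w).re -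
      2 * t * (cauchyTransform σ (fun ξ ↦ g ξ) w).re + t ^ 2 * (cauchyTransform σ 1 w).re := by
  have hg1 : Integrable (fun ξ ↦ (g ξ : ℂ)) σ := (hg.integrable one_le_two).ofReal
  have expand : (fun ξ ↦ (((g ξ - t) ^ 2 : ℝ) : ℂ)) =
      (fun ξ ↦ (g ξ : ℂ) ^ 2) +
        ((fun ξ ↦ ((-2 * t : ℝ) : ℂ) * g ξ) + fun ξ ↦ ((t ^ 2 : ℝ) : ℂ) * (1 : ℂ → ℂ) ξ) := by
    ext ξ
    simp only [Pi.add_apply, Pi.one_apply]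
    push_cast
    ring
  have square_nonneg := re_cauchyTransform_nonneg hσ (fun ξ ↦ sq_nonneg (g ξ - t))
    (hg.sub (memLp_const t)).integrable_sq hw
  have hlin : Integrable (fun ξ ↦ ((-2 * t : ℝ) : ℂ) * g ξ) σ := hg1.const_mul _
  have hconst : Integrable (fun ξ ↦ ((t ^ 2 : ℝ) : ℂ) * (1 : ℂ → ℂ) ξ) σ :=
    (integrable_const 1).const_mul _
  rw [expand, cauchyTransform_add hσ (integrable_ofReal_sq hg) (hlin.add hconst) hw,
    cauchyTransform_add hσ hlin hconst hw,
    cauchyTransform_const_mul, cauchyTransform_const_mul, add_re, add_re, re_ofReal_mul,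
    re_ofReal_mul] at square_nonneg
  linarith

lemma norm_normalizedCauchyTransform_sq_mul_le [NeZero σ] (hσ : ∀ᵐ ξ ∂σ, ‖ξ‖ = 1)
    (hg : MemLp g 2 σ) (hw : ‖w‖ < 1) :
    ‖normalizedCauchyTransform σ (fun ξ ↦ g ξ) w‖ ^ 2 * (cauchyTransform σ 1 w).re ≤
      2 * harmonicMajorant σ g w :=
  norm_div_sq_mul_re_le (re_cauchyTransform_one_pos hσ hw)
    (re_cauchyTransform_quadratic_nonneg hσ hg hw)

lemma harmonicOnNhd_harmonicMajorant [NeZero σ] (hσ : ∀ᵐ ξ ∂σ, ‖ξ‖ = 1)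
    (hg : MemLp g 2 σ) :
    HarmonicOnNhd (harmonicMajorant σ g) (ball 0 1) := by
  have hg1 : Integrable (fun ξ ↦ (g ξ : ℂ)) σ := (hg.integrable one_le_two).ofReal
  have one_ne : ∀ w ∈ ball (0 : ℂ) 1, cauchyTransform σ 1 w ≠ 0 := fun w hw h ↦
    (re_cauchyTransform_one_pos hσ (mem_ball_zero_iff.1 hw)).ne' (by rw [h, zero_re])
  have hdiff := ((differentiableOn_cauchyTransform hσ (integrable_ofReal_sq hg)).const_mul 2).sub
    (((differentiableOn_cauchyTransform hσ hg1).pow 2).div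
      (differentiableOn_cauchyTransform hσ (integrable_const 1)) one_ne)
  exact fun w hw ↦ (hdiff.analyticAt (isOpen_ball.mem_nhds hw)).harmonicAt_re

lemma exists_enorm_normalizedCauchyTransform_sq_mul_le [NeZero σ]
    (hσ : ∀ᵐ ξ ∂σ, ‖ξ‖ = 1) (hg : MemLp g 2 σ) :
    ∃ τ : Measure ℂ, IsFiniteMeasure τ ∧ (∀ᵐ ξ ∂τ, ‖ξ‖ = 1) ∧
      τ univ ≤ 2 * ∫⁻ ξ, ‖g ξ‖ₑ ^ 2 ∂σ ∧
      ∀ w, ‖w‖ < 1 → ‖normalizedCauchyTransform σ (fun ξ ↦ g ξ) w‖ₑ ^ 2 * poissonIntegral σ w ≤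
        4 * poissonIntegral τ w := by
  have majorant_nonneg (w : ℂ) (hw : ‖w‖ < 1) : 0 ≤ harmonicMajorant σ g w := by
    have := mul_nonneg (sq_nonneg ‖normalizedCauchyTransform σ (fun ξ ↦ g ξ) w‖)
      (re_cauchyTransform_one_pos hσ hw).le
    linarith [norm_normalizedCauchyTransform_sq_mul_le hσ hg hw]
  obtain ⟨τ, hτ_fin, hτ, hτ_eq⟩ := exists_poissonIntegral_eq_of_harmonicOnNhd
    (harmonicOnNhd_harmonicMajorant hσ hg) majorant_nonneg
  refine ⟨τ, hτ_fin, hτ, ?_, fun w hw ↦ ?_⟩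
  · rw [← poissonIntegral_zero hτ, hτ_eq 0 (by simp)]
    exact harmonicMajorant_zero_le hg
  calc ‖normalizedCauchyTransform σ (fun ξ ↦ g ξ) w‖ₑ ^ 2 * poissonIntegral σ w
      ≤ ‖normalizedCauchyTransform σ (fun ξ ↦ g ξ) w‖ₑ ^ 2 *
          ENNReal.ofReal (2 * (cauchyTransform σ 1 w).re) := by
        gcongr
        exact poissonIntegral_le_ofReal_re_cauchyTransform_one hσ hw
    _ = ENNReal.ofReal (‖normalizedCauchyTransform σ (fun ξ ↦ g ξ) w‖ ^ 2 *
          (2 * (cauchyTransform σ 1 w).re)) := by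
        rw [ENNReal.ofReal_mul (sq_nonneg _), ENNReal.ofReal_pow (norm_nonneg _), ofReal_norm]
    _ ≤ ENNReal.ofReal (4 * harmonicMajorant σ g w) :=
        ENNReal.ofReal_le_ofReal (by linarith [norm_normalizedCauchyTransform_sq_mul_le hσ hg hw])
    _ = 4 * poissonIntegral τ w := by
        rw [hτ_eq w hw, ENNReal.ofReal_mul zero_le_four, ENNReal.ofReal_ofNat]

lemma exists_ae_limsup_enorm_normalizedCauchyTransform_sq_le (hσ : ∀ᵐ ξ ∂σ, ‖ξ‖ = 1)
    (hg : MemLp g 2 σ) :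
    ∃ h : ℂ → ℝ≥0∞, Measurable h ∧ ∫⁻ z, h z ∂σ ≤ 8 * ∫⁻ ξ, ‖g ξ‖ₑ ^ 2 ∂σ ∧
      ∀ᵐ z ∂σ, Tendsto (poissonIntegral σ) (radialFilter z) (𝓝 ⊤) →
        limsup (fun w ↦ ‖normalizedCauchyTransform σ (fun ξ ↦ g ξ) w‖ₑ ^ 2) (radialFilter z) ≤
          h z := by
  rcases eq_zero_or_neZero σ with rfl | _
  · exact ⟨0, measurable_const, by simp, by simp⟩
  obtain ⟨τ, _, hτ, hτ_mass, hτ_le⟩ := exists_enorm_normalizedCauchyTransform_sq_mul_le hσ hg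
  refine ⟨fun z ↦ 4 * τ.rnDeriv σ z, (Measure.measurable_rnDeriv τ σ).const_mul 4, ?_, ?_⟩
  · calc ∫⁻ z, 4 * τ.rnDeriv σ z ∂σ = 4 * ∫⁻ z, τ.rnDeriv σ z ∂σ :=
          lintegral_const_mul 4 (Measure.measurable_rnDeriv τ σ)
      _ ≤ 4 * (2 * ∫⁻ ξ, ‖g ξ‖ₑ ^ 2 ∂σ) := by
          gcongr
          exact Measure.lintegral_rnDeriv_le.trans hτ_mass
      _ = 8 * ∫⁻ ξ, ‖g ξ‖ₑ ^ 2 ∂σ := by ring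
  filter_upwards [ae_limsup_poissonIntegral_div_le_rnDeriv hσ hτ, hσ] with z hz hz1 htop
  calc limsup (fun w ↦ ‖normalizedCauchyTransform σ (fun ξ ↦ g ξ) w‖ₑ ^ 2) (radialFilter z)
      ≤ limsup (fun w ↦ 4 * (poissonIntegral τ w / poissonIntegral σ w)) (radialFilter z) := by
        refine limsup_le_limsup ?_
        filter_upwards [eventually_norm_lt_one hz1, htop.eventually_ne ENNReal.top_ne_zero]
          with w hw hw_ne_zero
        have hw_ne_top : poissonIntegral σ w ≠ ⊤ :=
          poissonIntegral_eq_ofReal_integral hσ hw ▸ ENNReal.ofReal_ne_top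
        rw [← mul_div_assoc, ENNReal.le_div_iff_mul_le (.inl hw_ne_zero) (.inl hw_ne_top)]
        exact hτ_le w hw
    _ = 4 * limsup (fun w ↦ poissonIntegral τ w / poissonIntegral σ w) (radialFilter z) :=
        ENNReal.limsup_const_mul_of_ne_top (by simp)
    _ ≤ 4 * τ.rnDeriv σ z := by
        gcongr
        exact hz htop

end Majorant

section Convergence

variable {σ : Measure ℂ} {g h : ℂ → ℂ} {w z : ℂ}

lemma normalizedCauchyTransform_add (hσ : ∀ᵐ ξ ∂σ, ‖ξ‖ = 1) (hg : Integrable g σ)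
    (hh : Integrable h σ) (hw : ‖w‖ < 1) :
    normalizedCauchyTransform σ (g + h) w =
      normalizedCauchyTransform σ g w + normalizedCauchyTransform σ h w := by
  simp only [normalizedCauchyTransform, cauchyTransform_add hσ hg hh hw, add_div]

lemma normalizedCauchyTransform_const_mul (σ : Measure ℂ) (c : ℂ) (g : ℂ → ℂ) (w : ℂ) :
    normalizedCauchyTransform σ (fun ξ ↦ c * g ξ) w = c * normalizedCauchyTransform σ g w := by
  simp only [normalizedCauchyTransform, cauchyTransform_const_mul, mul_div_assoc]

lemma norm_mul_cauchyKernel_le_of_lipschitzWith {ξ : ℂ} {L : ℝ≥0} (hg : LipschitzWith L g)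
    (hz : ‖z‖ = 1) (hξ : ‖ξ‖ = 1) {r : ℝ} (hr0 : 0 < r) (hr1 : r < 1) :
    ‖(g ξ - g z) * cauchyKernel (r * z) ξ‖ ≤ 2 * L := by
  have hpos : 0 < ‖ξ - r * z‖ :=
    (sub_pos.2 (norm_ofReal_mul_lt_one hz hr0 hr1)).trans_le (one_sub_norm_le_norm_sub hξ)
  rw [norm_mul, norm_cauchyKernel hξ, ← div_eq_mul_inv, div_le_iff₀ hpos]
  calc ‖g ξ - g z‖ ≤ L * ‖ξ - z‖ := hg.norm_sub_le ξ z
    _ ≤ L * (2 * ‖ξ - r * z‖) := by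
        gcongr
        exact norm_sub_le_two_mul_norm_sub_ofReal_mul hz hξ hr0 hr1
    _ = 2 * L * ‖ξ - r * z‖ := by ring

variable [IsFiniteMeasure σ]

lemma norm_cauchyTransform_sub_le_of_lipschitzWith {L : ℝ≥0} (hσ : ∀ᵐ ξ ∂σ, ‖ξ‖ = 1)
    (hg : LipschitzWith L g) (hgi : Integrable g σ) (hz : ‖z‖ = 1) {r : ℝ} (hr0 : 0 < r)
    (hr1 : r < 1) :
    ‖cauchyTransform σ g (r * z) - g z * cauchyTransform σ 1 (r * z)‖ ≤
      2 * L * σ.real univ := by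
  have hw := norm_ofReal_mul_lt_one hz hr0 hr1
  have sub_eq : cauchyTransform σ g (r * z) - g z * cauchyTransform σ 1 (r * z) =
      ∫ ξ, (g ξ - g z) * cauchyKernel (r * z) ξ ∂σ := by
    simp only [cauchyTransform, Pi.one_apply, one_mul, sub_mul, ← integral_const_mul]
    exact (integral_sub (integrable_mul_cauchyKernel hσ hgi hw)
      (integrable_mul_cauchyKernel hσ (integrable_const (g z)) hw)).symm
  rw [sub_eq]
  exact norm_integral_le_of_norm_le_const (hσ.mono fun ξ hξ ↦
    norm_mul_cauchyKernel_le_of_lipschitzWith hg hz hξ hr0 hr1)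

lemma tendsto_normalizedCauchyTransform_of_lipschitzWith {L : ℝ≥0} (hσ : ∀ᵐ ξ ∂σ, ‖ξ‖ = 1)
    (hg : LipschitzWith L g) (hgi : Integrable g σ) (hz : ‖z‖ = 1)
    (htop : Tendsto (poissonIntegral σ) (radialFilter z) (𝓝 ⊤)) :
    Tendsto (normalizedCauchyTransform σ g) (radialFilter z) (𝓝 (g z)) := by
  have hnorm := tendsto_norm_cauchyTransform_one_atTop hσ hz htop
  have numerator_le : ∀ᶠ w in radialFilter z,
      ‖cauchyTransform σ g w - g z * cauchyTransform σ 1 w‖ ≤ 2 * L * σ.real univ :=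
    eventually_radialFilter_of_forall fun r ↦
      norm_cauchyTransform_sub_le_of_lipschitzWith hσ hg hgi hz
  rw [tendsto_iff_norm_sub_tendsto_zero]
  refine squeeze_zero' (.of_forall fun _ ↦ norm_nonneg _) ?_
    (tendsto_const_nhds.div_atTop hnorm : Tendsto
      (fun w ↦ 2 * L * σ.real univ / ‖cauchyTransform σ 1 w‖) (radialFilter z) (𝓝 0))
  filter_upwards [hnorm.eventually_gt_atTop 0, numerator_le] with w hK₀ hle
  rw [normalizedCauchyTransform, div_sub' (norm_pos_iff.1 hK₀), norm_div, mul_comm _ (g z)]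
  gcongr

lemma tendsto_normalizedCauchyTransform_ofReal_of_iInf_eq_zero {ι : Type*} {f : ℂ → ℝ}
    {g : ι → ℂ → ℝ} {h : ι → ℝ≥0∞} (hσ : ∀ᵐ ξ ∂σ, ‖ξ‖ = 1) (hf : Integrable f σ)
    (hg : ∀ i, ∃ L, LipschitzWith L (g i)) (hgi : ∀ i, Integrable (g i) σ) (hz : ‖z‖ = 1)
    (htop : Tendsto (poissonIntegral σ) (radialFilter z) (𝓝 ⊤))
    (hlimsup : ∀ i, limsup (fun w ↦
      ‖normalizedCauchyTransform σ (fun ξ ↦ ((f - g i) ξ : ℝ)) w‖ₑ ^ 2) (radialFilter z) ≤ h i)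
    (hiInf : ⨅ i, (h i + ‖f z - g i z‖ₑ ^ 2) = 0) :
    Tendsto (normalizedCauchyTransform σ fun ξ ↦ f ξ) (radialFilter z) (𝓝 (f z)) := by
  refine tendsto_of_forall_exists_eventually_edist_le fun ε hε ↦ ?_
  obtain ⟨i, hi⟩ : ∃ i, h i + ‖f z - g i z‖ₑ ^ 2 < ε ^ 2 :=
    iInf_lt_iff.1 (hiInf ▸ (pow_ne_zero 2 hε).bot_lt)
  obtain ⟨L, hL⟩ := hg i
  refine ⟨normalizedCauchyTransform σ fun ξ ↦ g i ξ, g i z,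
    tendsto_normalizedCauchyTransform_of_lipschitzWith hσ (isometry_ofReal.lipschitz.comp hL)
      (hgi i).ofReal hz htop, ?_, ?_⟩
  · have henorm : ‖f z - g i z‖ₑ < ε := lt_of_pow_lt_pow_left' 2 (le_add_self.trans_lt hi)
    rw [edist_comm, isometry_ofReal.edist_eq, edist_eq_enorm_sub]
    exact henorm.le
  · filter_upwards [eventually_lt_of_limsup_lt ((hlimsup i).trans_lt (le_self_add.trans_lt hi)),
      eventually_norm_lt_one hz] with w hsq hw
    have hadd : normalizedCauchyTransform σ (fun ξ ↦ f ξ) w =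
        normalizedCauchyTransform σ (fun ξ ↦ ((f - g i) ξ : ℝ)) w +
          normalizedCauchyTransform σ (fun ξ ↦ g i ξ) w := by
      refine Eq.trans ?_ (normalizedCauchyTransform_add hσ (hf.sub (hgi i)).ofReal
        (hgi i).ofReal hw)
      congr 1
      ext ξ
      simp
    rw [hadd, edist_eq_enorm_sub, add_sub_cancel_right]
    exact (lt_of_pow_lt_pow_left' 2 hsq).le

lemma ae_tendsto_normalizedCauchyTransform_ofReal_of_memLp (hσ : ∀ᵐ ξ ∂σ, ‖ξ‖ = 1) {f : ℂ → ℝ}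
    (hf : MemLp f 2 σ) :
    ∀ᵐ z ∂σ, Tendsto (poissonIntegral σ) (radialFilter z) (𝓝 ⊤) →
      Tendsto (normalizedCauchyTransform σ fun ξ ↦ f ξ) (radialFilter z) (𝓝 (f z)) := by
  choose g hg_lip hg hfg using fun n : ℕ ↦ exists_lipschitzWith_lintegral_enorm_sub_sq_le hf
    (ENNReal.inv_ne_zero.2 (ENNReal.natCast_ne_top n))
  choose h hh hh_le hlimsup using fun n ↦
    exists_ae_limsup_enorm_normalizedCauchyTransform_sq_le hσ (hf.sub (hg n))
  have lintegral_le (n : ℕ) :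
      ∫⁻ z, (h n z + ‖f z - g n z‖ₑ ^ 2) ∂σ ≤ 9 * (n : ℝ≥0∞)⁻¹ :=
    calc ∫⁻ z, (h n z + ‖f z - g n z‖ₑ ^ 2) ∂σ
        = (∫⁻ z, h n z ∂σ) + ∫⁻ z, ‖f z - g n z‖ₑ ^ 2 ∂σ := lintegral_add_left (hh n) _
      _ ≤ 8 * (n : ℝ≥0∞)⁻¹ + (n : ℝ≥0∞)⁻¹ := by
          gcongr
          · exact (hh_le n).trans (mul_le_mul_right (hfg n) 8)
          · exact hfg n
      _ = 9 * (n : ℝ≥0∞)⁻¹ := by ring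
  have iInf_lintegral : ⨅ n, ∫⁻ z, (h n z + ‖f z - g n z‖ₑ ^ 2) ∂σ = 0 := by
    have bound_lim : Tendsto (fun n : ℕ ↦ 9 * (n : ℝ≥0∞)⁻¹) atTop (𝓝 0) := by
      simpa using ENNReal.Tendsto.const_mul ENNReal.tendsto_inv_nat_nhds_zero
        (.inr (ENNReal.ofNat_ne_top (n := 9)))
    exact le_antisymm (ge_of_tendsto' bound_lim fun n ↦ (iInf_le _ n).trans (lintegral_le n))
      zero_le
  have haemeas (n : ℕ) : AEMeasurable (fun z ↦ h n z + ‖f z - g n z‖ₑ ^ 2) σ :=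
    (hh n).aemeasurable.add ((hf.1.sub (hg n).1).enorm.pow_const 2)
  filter_upwards [hσ, ae_all_iff.2 hlimsup,
    ae_iInf_eq_zero_of_iInf_lintegral_eq_zero haemeas iInf_lintegral] with z hz hlimsup hiInf htop
  exact tendsto_normalizedCauchyTransform_ofReal_of_iInf_eq_zero hσ (hf.integrable one_le_two)
    hg_lip (fun n ↦ (hg n).integrable one_le_two) hz htop (fun n ↦ hlimsup n htop) hiInf

lemma ae_tendsto_normalizedCauchyTransform_of_memLp (hσ : ∀ᵐ ξ ∂σ, ‖ξ‖ = 1) {f : ℂ → ℂ}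
    (hf : MemLp f 2 σ) :
    ∀ᵐ z ∂σ, Tendsto (poissonIntegral σ) (radialFilter z) (𝓝 ⊤) →
      Tendsto (normalizedCauchyTransform σ f) (radialFilter z) (𝓝 (f z)) := by
  have hre : MemLp (fun ξ ↦ (f ξ).re) 2 σ := hf.re
  have him : MemLp (fun ξ ↦ (f ξ).im) 2 σ := hf.im
  filter_upwards [hσ, ae_tendsto_normalizedCauchyTransform_ofReal_of_memLp hσ hre,
    ae_tendsto_normalizedCauchyTransform_ofReal_of_memLp hσ him] with z hz re_lim im_lim htop
  have lim := (re_lim htop).add ((im_lim htop).const_mul I)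
  rw [mul_comm, re_add_im] at lim
  refine lim.congr' ((eventually_norm_lt_one hz).mono fun w hw ↦ ?_)
  have hadd := normalizedCauchyTransform_add hσ (g := fun ξ ↦ (f ξ).re)
    (h := fun ξ ↦ I * (f ξ).im) (hre.integrable one_le_two).ofReal
    ((him.integrable one_le_two).ofReal.const_mul I) hw
  rw [← normalizedCauchyTransform_const_mul, ← hadd]
  congr 1
  ext ξ
  rw [Pi.add_apply, mul_comm, re_add_im]

end Convergence

section IntegrableDensity

variable {σ : Measure ℂ} {f : ℂ → ℂ} {ρ : ℂ → ℝ≥0}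

lemma cauchyTransform_withDensity_inv_mul (hρ : AEMeasurable ρ σ)
    (hρ0 : ∀ ξ, ρ ξ ≠ 0) (f : ℂ → ℂ) (w : ℂ) :
    cauchyTransform (σ.withDensity fun ξ ↦ ρ ξ) (fun ξ ↦ (ρ ξ : ℂ)⁻¹ * f ξ) w =
      cauchyTransform σ f w := by
  rw [cauchyTransform, integral_withDensity_eq_integral_smul₀ hρ]
  refine integral_congr_ae (.of_forall fun ξ ↦ ?_)
  have hρξ : (ρ ξ : ℂ) ≠ 0 := mod_cast hρ0 ξ
  simp only [NNReal.smul_def, real_smul, mul_assoc, mul_inv_cancel_left₀ hρξ]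

lemma ae_tendsto_normalizedCauchyTransform_of_memLp_withDensity (hσ : ∀ᵐ ξ ∂σ, ‖ξ‖ = 1)
    (hρ : AEMeasurable ρ σ) (hρ1 : ∀ ξ, 1 ≤ ρ ξ)
    [IsFiniteMeasure (σ.withDensity fun ξ ↦ ρ ξ)]
    (hf : MemLp (fun ξ ↦ (ρ ξ : ℂ)⁻¹ * f ξ) 2 (σ.withDensity fun ξ ↦ ρ ξ)) :
    ∀ᵐ z ∂σ, Tendsto (poissonIntegral σ) (radialFilter z) (𝓝 ⊤) →
      Tendsto (normalizedCauchyTransform σ f) (radialFilter z) (𝓝 (f z)) := by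
  set ν := σ.withDensity fun ξ ↦ ρ ξ with hν_def
  have hνσ : ν ≪ σ := withDensity_absolutelyContinuous _ _
  have hσν : σ ≤ ν := by
    simpa using withDensity_mono (μ := σ) (f := 1)
      (.of_forall fun ξ ↦ ENNReal.one_le_coe_iff.2 (hρ1 ξ))
  have hν : ∀ᵐ ξ ∂ν, ‖ξ‖ = 1 := hνσ.ae_le hσ
  have hρ0 (ξ : ℂ) : ρ ξ ≠ 0 := (one_pos.trans_le (hρ1 ξ)).ne'
  have hinv : MemLp (fun ξ ↦ (ρ ξ : ℂ)⁻¹ * (1 : ℂ → ℂ) ξ) 2 ν := by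
    have hmeas : AEMeasurable (fun ξ ↦ (ρ ξ : ℂ)⁻¹) ν :=
      (by fun_prop : Measurable fun t : ℝ≥0 ↦ (t : ℂ)⁻¹).comp_aemeasurable (hρ.mono_ac hνσ)
    simp only [Pi.one_apply, mul_one]
    refine .of_bound hmeas.aestronglyMeasurable 1 (.of_forall fun ξ ↦ ?_)
    simpa using inv_le_one_of_one_le₀ (NNReal.one_le_coe.2 (hρ1 ξ))
  have eq_div (w : ℂ) (hK₀ : cauchyTransform ν 1 w ≠ 0) :
      normalizedCauchyTransform ν (fun ξ ↦ (ρ ξ : ℂ)⁻¹ * f ξ) w /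
        normalizedCauchyTransform ν (fun ξ ↦ (ρ ξ : ℂ)⁻¹ * (1 : ℂ → ℂ) ξ) w =
      normalizedCauchyTransform σ f w := by
    simp only [normalizedCauchyTransform, hν_def, cauchyTransform_withDensity_inv_mul hρ hρ0]
    exact div_div_div_cancel_right₀ hK₀ _ _
  filter_upwards [hσ, hσν.absolutelyContinuous.ae_le
      (ae_tendsto_normalizedCauchyTransform_of_memLp hν hf),
    hσν.absolutelyContinuous.ae_le (ae_tendsto_normalizedCauchyTransform_of_memLp hν hinv)]
    with z hz lim_num lim_den htop
  have hρz : (ρ z : ℂ)⁻¹ ≠ 0 := inv_ne_zero (mod_cast hρ0 z)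
  have htop' := tendsto_nhds_top_mono' htop fun w ↦ poissonIntegral_mono hσν w
  have lim_div := (lim_num htop').div (lim_den htop') (by simpa using hρz)
  rw [Pi.one_apply, mul_one, mul_div_cancel_left₀ _ hρz] at lim_div
  exact lim_div.congr' (((tendsto_norm_cauchyTransform_one_atTop hν hz htop').eventually_gt_atTop
    0).mono fun w hw ↦ eq_div w (norm_pos_iff.1 hw))

-- With respect to `(1 + |f|) σ`, both `f / (1 + |f|)` and `1 / (1 + |f|)` are bounded.
theorem ae_tendsto_normalizedCauchyTransform [IsFiniteMeasure σ] (hσ : ∀ᵐ ξ ∂σ, ‖ξ‖ = 1)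
    (hf : Integrable f σ) :
    ∀ᵐ z ∂σ, Tendsto (poissonIntegral σ) (radialFilter z) (𝓝 ⊤) →
      Tendsto (normalizedCauchyTransform σ f) (radialFilter z) (𝓝 (f z)) := by
  have hρ : AEMeasurable (fun ξ ↦ 1 + ‖f ξ‖₊) σ := hf.1.nnnorm.aemeasurable.const_add 1
  have hfin : IsFiniteMeasure (σ.withDensity fun ξ ↦ (1 + ‖f ξ‖₊ : ℝ≥0)) := by
    refine isFiniteMeasure_withDensity ?_
    simp only [ENNReal.coe_add, ENNReal.coe_one, ← enorm_eq_nnnorm]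
    rw [lintegral_add_left measurable_const]
    exact ENNReal.add_ne_top.2 ⟨by simp, hf.2.ne⟩
  have hνσ := withDensity_absolutelyContinuous σ fun ξ ↦ ((1 + ‖f ξ‖₊ : ℝ≥0) : ℝ≥0∞)
  have hmeas : AEMeasurable (fun ξ ↦ ((1 + ‖f ξ‖₊ : ℝ≥0) : ℂ)⁻¹ * f ξ) σ :=
    ((by fun_prop : Measurable fun t : ℝ≥0 ↦ (t : ℂ)⁻¹).comp_aemeasurable hρ).mul hf.1.aemeasurable
  refine ae_tendsto_normalizedCauchyTransform_of_memLp_withDensity hσ hρ (fun _ ↦ le_self_add)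
    (.of_bound (hmeas.mono_ac hνσ).aestronglyMeasurable 1 (.of_forall fun ξ ↦ ?_))
  rw [norm_mul, norm_inv, norm_real, NNReal.norm_eq, inv_mul_le_iff₀ (by positivity), mul_one]
  simp

end IntegrableDensity

end Poltoratski

/-- **Poltoratski's theorem on nontangential boundary values.**
Let `σ` be a nonzero finite positive Borel measure on the unit circle and let
`f ∈ L¹(σ)`.  Then for `σ_s`-almost every `z ∈ 𝕋` (where `σ_s` is the singular
part of `σ` with respect to normalized Lebesgue measure `m` on `𝕋`),
`𝒦_{fσ}(rz)/𝒦_σ(rz) → f(z)` as `r → 1⁻`. -/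
theorem poltoratski_nontangential_boundary_values
    (σ : Measure ℂ) [IsFiniteMeasure σ] (hσ_ne : σ ≠ 0)
    (hσ_supp : σ (Metric.sphere (0 : ℂ) 1)ᶜ = 0)
    (f : ℂ → ℂ) (hf : Integrable f σ) :
    ∀ᵐ z ∂(σ.singularPart circleHaar),
      Tendsto
        (fun r : ℝ =>
          (∫ ξ, f ξ * (1 - (starRingEnd ℂ) ξ * ((r : ℂ) * z))⁻¹ ∂σ) /
            (∫ ξ, (1 - (starRingEnd ℂ) ξ * ((r : ℂ) * z))⁻¹ ∂σ))
        (nhdsWithin 1 (Set.Iio 1)) (nhds (f z)) := by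
  have hσ : ∀ᵐ ξ ∂σ, ‖ξ‖ = 1 := Poltoratski.ae_norm_eq_one_iff.2 hσ_supp
  filter_upwards [Poltoratski.ae_singularPart_tendsto_poissonIntegral_top hσ,
    (Measure.absolutelyContinuous_of_le (Measure.singularPart_le σ circleHaar)).ae_le
      (Poltoratski.ae_tendsto_normalizedCauchyTransform hσ hf)] with z htop hlim
  simpa only [Poltoratski.normalizedCauchyTransform, Poltoratski.cauchyTransform,
    Poltoratski.cauchyKernel, Pi.one_apply, one_mul, Function.comp_def] using!
    (hlim htop).comp tendsto_map
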